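/- arXiv:2410.02418 — 2 statements merged into one kernel-verified Lean document; each statement's English description precedes it below -/
import Mathlib

section
/- Let N ∈ ℕ, N ≥ 4, ω = e^{2πi/3}, β = ω − 1 and D = {0, ±1, ±ω, ±ω²}. There are exactly 12 distinct Eisenstein integers x ∈ ℤ[ω] not divisible by β such that x has a 2-NAF (β, D)-representation containing exactly N nonzero digits and x has exactly s_N optimal representations, where s_N = ⌊(6·2^N + 1)/7⌋. -/
/-!
Write `U i = (1 + ω) ^ i`, `i ∈ ℤ/6`, for the nonzero digits. Modulo `β` the units fall into the
two classes `{U i, U (i + 2), U (i + 4)}`, so a representation of `U i + β x` starts with one of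
three digits, followed by a representation of `x`, `x + U (i + 3)` or `x + U (i + 4)` (`rep_unit`);
a representation of `β x` starts with `0`. Adding a unit raises the minimal weight by at most one
(`can_add_U`), and hence `β x + unit` is never lighter than `x` (`can_of_U`). It follows that the
2-NAF has minimal weight.

For `y` of minimal weight `n` let `f` be the number of its optimal representations and `a j` the
number of normalized representations of `y + U j` of weight `n - 1`. Passing from `y` to
`U i + β² y` turns `f` into `f + a i + 2 a (i + 1) + a (i + 2)`, and each new `a j` is given by an
equally simple linear formula (`stepA`). So the counts along a 2-NAF, encoded as a word over
`Option (ZMod 6)`, follow an explicit recursion `cnt` (`count_spec`, `enumOpt_val`).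

By induction, `f ≤ s_n`, together with sharp bounds on the `a j` relative to the lowest digit
(`Bounds`, `bounds_cnt`). If `f = s_n`, then the word without its lowest block is extremal as
well, the counts have a definite shape (`Extremal`), and the next digit is determined by the
previous one up to the choice of a rotation, which is forced except at weight `3`, where two
rotations are possible (`Extremal.step`, `Extremal.cons`). Thus for `N ≥ 4` the extremal elements
are parametrized by the lowest digit and one Boolean (`eq_ext_of_max`, `extremal_ext`), injectively
(`ext_inj`), which makes `6 * 2 = 12`.
-/

open Matrix

noncomputable section

/-- The primitive cube root of unity `ω = exp(2πi/3)`. -/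
def ω : ℂ := Complex.exp (2 * Real.pi * Complex.I / 3)

/-- The base `β = ω - 1`. -/
def eβ : ℂ := ω - 1

/-- The digit set `D = {0, ±1, ±ω, ±ω²}`. -/
def eD : Set ℂ := {0, 1, -1, ω, -ω, ω ^ 2, -ω ^ 2}

/-- The ring of Eisenstein integers `ℤ[ω]`, as a subset of `ℂ`. -/
def EisZ : Set ℂ := {x | ∃ a b : ℤ, x = (a : ℂ) + (b : ℂ) * ω}

/-- Value of a digit string `d_{n-1} ⋯ d_0`, given as a list with the least
significant digit first: `eval [d_0, d_1, …, d_{n-1}] = Σ d_j β^j`. -/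
def evalE (l : List ℂ) : ℂ :=
  l.foldr (fun d acc => d + eβ * acc) 0

/-- `l` (least significant digit first) is a `(β, D)`-representation of `x`. -/
def eIsRep (x : ℂ) (l : List ℂ) : Prop :=
  (∀ d ∈ l, d ∈ eD) ∧ evalE l = x

/-- A representation is normalized if it is empty or its leading digit
(the last entry of the LSD-first list) is nonzero. -/
def eNormalized (l : List ℂ) : Prop := l.getLast? ≠ some 0

open scoped Classical in
/-- Number of nonzero digits (Hamming weight). -/
def eweight (l : List ℂ) : ℕ := (l.filter (fun d => d ≠ 0)).length

/-- `W`-NAF property: among any `W` consecutive digits at most one is nonzero. -/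
def eNAF (W : ℕ) (l : List ℂ) : Prop :=
  ∀ j k : ℕ, j < k → k < j + W → l.getD j 0 ≠ 0 → l.getD k 0 = 0

/-- A representation of `x` is optimal if it is normalized and its number of
nonzero digits is minimal among all representations of `x`. -/
def eOptimal (x : ℂ) (l : List ℂ) : Prop :=
  eIsRep x l ∧ eNormalized l ∧ ∀ l' : List ℂ, eIsRep x l' → eweight l ≤ eweight l'

/-- The number of optimal representations of `x`. -/
def enumOpt (x : ℂ) : ℕ := Nat.card {l : List ℂ // eOptimal x l}

/-- The sequence `s_N = ⌊(6·2^N + 1)/7⌋`. -/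
def sseq (N : ℕ) : ℕ := (6 * 2 ^ N + 1) / 7

/-! ### Arithmetic of the Eisenstein integers -/

lemma ω_sq : ω ^ 2 = -1 - ω := by
  have h : IsPrimitiveRoot ω 3 := by
    have := Complex.isPrimitiveRoot_exp 3 (by norm_num)
    simpa [ω] using this
  have := h.geom_sum_eq_zero (by norm_num)
  simp [Finset.sum_range_succ] at this
  linear_combination this

lemma coord_zero {a b : ℤ} (h : (a : ℂ) + b * ω = 0) : a = 0 ∧ b = 0 := by
  have h1 : ((a ^ 2 - a * b + b ^ 2 : ℤ) : ℂ) = 0 := by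
    push_cast
    linear_combination (a - b - b * ω) * h + b ^ 2 * ω_sq
  have h2 : a ^ 2 - a * b + b ^ 2 = 0 := by exact_mod_cast h1
  have h3 : a = 0 := by
    by_contra hne
    have : 0 < a ^ 2 := by positivity
    nlinarith [sq_nonneg (a - 2 * b)]
  subst h3
  have : b ^ 2 = 0 := by linarith
  exact ⟨rfl, by simpa using this⟩

lemma eβ_def : eβ = ω - 1 := rfl

lemma eβ_ne : eβ ≠ 0 := by
  intro h
  have : ((-1 : ℤ) : ℂ) + (1 : ℤ) * ω = 0 := by
    push_cast; rw [← h, eβ]; ring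
  have := coord_zero this
  omega

lemma eisZ_zero : (0 : ℂ) ∈ EisZ := ⟨0, 0, by simp⟩

lemma eisZ_add {x y : ℂ} (hx : x ∈ EisZ) (hy : y ∈ EisZ) : x + y ∈ EisZ := by
  obtain ⟨a, b, rfl⟩ := hx
  obtain ⟨c, d, rfl⟩ := hy
  exact ⟨a + c, b + d, by push_cast; ring⟩

lemma eisZ_sub {x y : ℂ} (hx : x ∈ EisZ) (hy : y ∈ EisZ) : x - y ∈ EisZ := by
  obtain ⟨a, b, rfl⟩ := hx
  obtain ⟨c, d, rfl⟩ := hy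
  exact ⟨a - c, b - d, by push_cast; ring⟩

lemma eisZ_mul {x : ℂ} (hx : x ∈ EisZ) : eβ * x ∈ EisZ := by
  obtain ⟨a, b, rfl⟩ := hx
  refine ⟨-a - b, a - 2 * b, ?_⟩
  push_cast
  rw [eβ]
  linear_combination (b : ℂ) * ω_sq

/-- First coordinate, in the basis `1, ω`, of the sixth root of unity `(1 + ω) ^ i`. -/
def cA (i : ZMod 6) : ℤ := (![1, 1, 0, -1, -1, 0] : Fin 6 → ℤ) i

/-- Second coordinate, in the basis `1, ω`, of the sixth root of unity `(1 + ω) ^ i`. -/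
def cB (i : ZMod 6) : ℤ := (![0, 1, 1, 0, -1, -1] : Fin 6 → ℤ) i

/-- The units of `ℤ[ω]` (the nonzero digits), indexed cyclically: `U i = (1 + ω) ^ i`. -/
def U (i : ZMod 6) : ℂ := cA i + cB i * ω

lemma U_add_one (i : ZMod 6) : U (i + 1) = (1 + ω) * U i := by
  have h1 : cA (i + 1) = cA i - cB i := by revert i; decide
  have h2 : cB (i + 1) = cA i := by revert i; decide
  simp only [U, h1, h2]
  push_cast
  linear_combination -(cB i : ℂ) * ω_sq

lemma U_add_two (i : ZMod 6) : U (i + 2) = ω * U i := by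
  have : i + 2 = i + 1 + 1 := by ring
  rw [this, U_add_one, U_add_one]
  linear_combination U i * ω_sq

lemma U_add_three (i : ZMod 6) : U (i + 3) = -U i := by
  have : i + 3 = i + 2 + 1 := by ring
  rw [this, U_add_one, U_add_two]
  linear_combination U i * ω_sq

lemma U_add_four (i : ZMod 6) : U (i + 4) = -(1 + ω) * U i := by
  have : i + 4 = i + 3 + 1 := by ring
  rw [this, U_add_one, U_add_three]
  ring

lemma U_add_five (i : ZMod 6) : U (i + 5) = -ω * U i := by
  have : i + 5 = i + 3 + 2 := by ring
  rw [this, U_add_two, U_add_three]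
  ring

lemma eisZ_U (i : ZMod 6) : U i ∈ EisZ := ⟨cA i, cB i, rfl⟩

lemma U_ne (i : ZMod 6) : U i ≠ 0 := by
  intro h
  have h1 : ∀ i, ¬ (cA i = 0 ∧ cB i = 0) := by decide
  exact h1 i (coord_zero h)

lemma mem_eD {d : ℂ} : d ∈ eD ↔ d = 0 ∨ ∃ i, d = U i := by
  have h0 : U 0 = 1 := by simp [U, cA, cB]
  have h1 : U 1 = -ω ^ 2 := by
    rw [show (1 : ZMod 6) = 0 + 1 by decide, U_add_one, h0, ω_sq]; ring
  have h2 : U 2 = ω := by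
    rw [show (2 : ZMod 6) = 0 + 2 by decide, U_add_two, h0]; ring
  have h3 : U 3 = -1 := by
    rw [show (3 : ZMod 6) = 0 + 3 by decide, U_add_three, h0]
  have h4 : U 4 = ω ^ 2 := by
    rw [show (4 : ZMod 6) = 0 + 4 by decide, U_add_four, h0, ω_sq]; ring
  have h5 : U 5 = -ω := by
    rw [show (5 : ZMod 6) = 0 + 5 by decide, U_add_five, h0]; ring
  simp only [eD, Set.mem_insert_iff, Set.mem_singleton_iff]
  constructor
  · rintro (h | h | h | h | h | h | h)
    · exact Or.inl h
    · exact Or.inr ⟨0, by rw [h, h0]⟩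
    · exact Or.inr ⟨3, by rw [h, h3]⟩
    · exact Or.inr ⟨2, by rw [h, h2]⟩
    · exact Or.inr ⟨5, by rw [h, h5]⟩
    · exact Or.inr ⟨4, by rw [h, h4]⟩
    · exact Or.inr ⟨1, by rw [h, h1]⟩
  · rintro (h | ⟨i, h⟩)
    · exact Or.inl h
    · have hi : ∀ i : ZMod 6, i = 0 ∨ i = 1 ∨ i = 2 ∨ i = 3 ∨ i = 4 ∨ i = 5 := by decide
      rcases hi i with rfl | rfl | rfl | rfl | rfl | rfl
      · simp [h, h0]
      · simp [h, h1]
      · simp [h, h2]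
      · simp [h, h3]
      · simp [h, h4]
      · simp [h, h5]

lemma coord_of_dvd {a b : ℤ} {t : ℂ} (ht : t ∈ EisZ) (h : (a : ℂ) + b * ω = eβ * t) :
    ∃ c d : ℤ, t = c + d * ω ∧ a = -c - d ∧ b = c - 2 * d := by
  obtain ⟨c, d, rfl⟩ := ht
  refine ⟨c, d, rfl, ?_⟩
  have : ((a - (-c - d) : ℤ) : ℂ) + ((b - (c - 2 * d) : ℤ) : ℂ) * ω = 0 := by
    rw [eβ] at h
    push_cast
    linear_combination h + (d : ℂ) * ω_sq
  have := coord_zero this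
  omega

lemma U_not_dvd (i : ZMod 6) {t : ℂ} (ht : t ∈ EisZ) : U i ≠ eβ * t := by
  intro h
  obtain ⟨c, d, -, h1, h2⟩ := coord_of_dvd ht h
  have h3 : ∀ i, ¬ (3 : ℤ) ∣ cA i + cB i := by decide
  exact h3 i ⟨-d, by omega⟩

/-- Units congruent modulo `β` differ by a cube root of unity; the quotients are again units. -/
lemma digit_cases {i j : ZMod 6} {x y : ℂ} (hx : x ∈ EisZ) (hy : y ∈ EisZ)
    (h : U i + eβ * x = U j + eβ * y) :
    (j = i ∧ y = x) ∨ (j = i + 2 ∧ y = x + U (i + 3)) ∨ (j = i + 4 ∧ y = x + U (i + 4)) := by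
  have h0 : ((cA i - cA j : ℤ) : ℂ) + ((cB i - cB j : ℤ) : ℂ) * ω = eβ * (y - x) := by
    simp only [U] at h
    push_cast
    linear_combination h
  obtain ⟨c, d, -, h1, h2⟩ := coord_of_dvd (eisZ_sub hy hx) h0
  have h3 : (3 : ℤ) ∣ (cA i - cA j) + (cB i - cB j) := ⟨-d, by omega⟩
  have h4 : ∀ i j, (3 : ℤ) ∣ (cA i - cA j) + (cB i - cB j) → j = i ∨ j = i + 2 ∨ j = i + 4 := by
    decide
  rcases h4 i j h3 with rfl | rfl | rfl
  · exact Or.inl ⟨rfl, mul_left_cancel₀ eβ_ne (by linear_combination -h)⟩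
  · refine Or.inr (Or.inl ⟨rfl, mul_left_cancel₀ eβ_ne ?_⟩)
    rw [U_add_two] at h
    rw [U_add_three]
    linear_combination -h + U i * eβ_def
  · refine Or.inr (Or.inr ⟨rfl, mul_left_cancel₀ eβ_ne ?_⟩)
    rw [U_add_four] at h
    rw [U_add_four]
    linear_combination -h + (1 + ω) * U i * eβ_def + U i * ω_sq

/-- The six units are pairwise incongruent modulo `β²`. -/
lemma head_inj {i j : ZMod 6} {x y : ℂ} (hx : x ∈ EisZ) (hy : y ∈ EisZ)
    (h : U i + eβ * (eβ * x) = U j + eβ * (eβ * y)) : i = j ∧ x = y := by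
  rcases digit_cases (eisZ_mul hx) (eisZ_mul hy) h with ⟨h1, h2⟩ | ⟨-, h2⟩ | ⟨-, h2⟩
  · exact ⟨h1.symm, (mul_left_cancel₀ eβ_ne h2).symm⟩
  · exact absurd (show U (i + 3) = eβ * (y - x) by linear_combination -h2)
      (U_not_dvd _ (eisZ_sub hy hx))
  · exact absurd (show U (i + 4) = eβ * (y - x) by linear_combination -h2)
      (U_not_dvd _ (eisZ_sub hy hx))

/-! ### Representations -/

lemma eweight_nil : eweight [] = 0 := rfl

lemma eweight_zero_cons (l : List ℂ) : eweight (0 :: l) = eweight l := by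
  simp [eweight]

lemma eweight_U_cons (i : ZMod 6) (l : List ℂ) : eweight (U i :: l) = eweight l + 1 := by
  simp [eweight, U_ne]

lemma eIsRep_nil {x : ℂ} : eIsRep x [] ↔ x = 0 := by
  simp [eIsRep, evalE, eq_comm]

lemma eIsRep_cons {x d : ℂ} {l : List ℂ} :
    eIsRep x (d :: l) ↔ d ∈ eD ∧ ∃ y, eIsRep y l ∧ x = d + eβ * y := by
  constructor
  · rintro ⟨h1, h2⟩
    exact ⟨h1 d (by simp), evalE l, ⟨fun e he => h1 e (by simp [he]), rfl⟩, h2.symm⟩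
  · rintro ⟨h1, y, ⟨h2, h3⟩, h4⟩
    refine ⟨?_, ?_⟩
    · intro e he
      rcases List.mem_cons.1 he with rfl | he
      · exact h1
      · exact h2 e he
    · rw [h4, ← h3]; rfl

lemma eIsRep_zero_cons {x : ℂ} {l : List ℂ} (h : eIsRep x l) : eIsRep (eβ * x) (0 :: l) :=
  eIsRep_cons.2 ⟨mem_eD.2 (Or.inl rfl), x, h, by ring⟩

lemma eIsRep_U_cons (i : ZMod 6) {x : ℂ} {l : List ℂ} (h : eIsRep x l) :
    eIsRep (U i + eβ * x) (U i :: l) :=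
  eIsRep_cons.2 ⟨mem_eD.2 (Or.inr ⟨i, rfl⟩), x, h, rfl⟩

lemma eisZ_of_rep {x : ℂ} {l : List ℂ} (h : eIsRep x l) : x ∈ EisZ := by
  induction l generalizing x with
  | nil => rw [eIsRep_nil.1 h]; exact eisZ_zero
  | cons d l ih =>
    obtain ⟨hd, y, hy, rfl⟩ := eIsRep_cons.1 h
    refine eisZ_add ?_ (eisZ_mul (ih hy))
    rcases mem_eD.1 hd with rfl | ⟨i, rfl⟩
    · exact eisZ_zero
    · exact eisZ_U i

/-- The representations of a nonzero-residue element `U i + β x`: the lowest digit is one of the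
three units congruent to `U i` modulo `β`. -/
lemma rep_unit {i : ZMod 6} {x : ℂ} (hx : x ∈ EisZ) {l : List ℂ}
    (h : eIsRep (U i + eβ * x) l) :
    ∃ l', (l = U i :: l' ∧ eIsRep x l') ∨ (l = U (i + 2) :: l' ∧ eIsRep (x + U (i + 3)) l') ∨
      (l = U (i + 4) :: l' ∧ eIsRep (x + U (i + 4)) l') := by
  cases l with
  | nil =>
    have := eIsRep_nil.1 h
    exact absurd (show U i = eβ * (0 - x) by linear_combination this)
      (U_not_dvd _ (eisZ_sub eisZ_zero hx))
  | cons d l =>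
    refine ⟨l, ?_⟩
    obtain ⟨hd, y, hy, he⟩ := eIsRep_cons.1 h
    have hyZ := eisZ_of_rep hy
    rcases mem_eD.1 hd with rfl | ⟨j, rfl⟩
    · exact absurd (show U i = eβ * (y - x) by linear_combination he)
        (U_not_dvd _ (eisZ_sub hyZ hx))
    · rcases digit_cases hx hyZ he with ⟨rfl, rfl⟩ | ⟨rfl, rfl⟩ | ⟨rfl, rfl⟩
      · exact Or.inl ⟨rfl, hy⟩
      · exact Or.inr (Or.inl ⟨rfl, hy⟩)
      · exact Or.inr (Or.inr ⟨rfl, hy⟩)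

lemma rep_mul {x : ℂ} (hx : x ∈ EisZ) {l : List ℂ} (h : eIsRep (eβ * x) l) :
    (l = [] ∧ x = 0) ∨ ∃ l', l = 0 :: l' ∧ eIsRep x l' := by
  cases l with
  | nil =>
    have := eIsRep_nil.1 h
    exact Or.inl ⟨rfl, by simpa [eβ_ne] using this⟩
  | cons d l =>
    refine Or.inr ⟨l, ?_⟩
    obtain ⟨hd, y, hy, he⟩ := eIsRep_cons.1 h
    have hyZ := eisZ_of_rep hy
    rcases mem_eD.1 hd with rfl | ⟨j, rfl⟩
    · have : x = y := mul_left_cancel₀ eβ_ne (by linear_combination he)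
      exact ⟨rfl, this ▸ hy⟩
    · exact absurd (show U j = eβ * (x - y) by linear_combination -he)
        (U_not_dvd _ (eisZ_sub hx hyZ))

/-! ### Minimal weights -/

/-- `x` has a representation of weight at most `k`. -/
def Can (x : ℂ) (k : ℕ) : Prop := ∃ l, eIsRep x l ∧ eweight l ≤ k

lemma Can.mono {x : ℂ} {k m : ℕ} (h : Can x k) (hkm : k ≤ m) : Can x m := by
  obtain ⟨l, h1, h2⟩ := h
  exact ⟨l, h1, h2.trans hkm⟩

lemma can_mul {x : ℂ} {k : ℕ} (h : Can x k) : Can (eβ * x) k := by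
  obtain ⟨l, h1, h2⟩ := h
  exact ⟨0 :: l, eIsRep_zero_cons h1, by rwa [eweight_zero_cons]⟩

lemma can_U (i : ZMod 6) {x : ℂ} {k : ℕ} (h : Can x k) : Can (U i + eβ * x) (k + 1) := by
  obtain ⟨l, h1, h2⟩ := h
  exact ⟨U i :: l, eIsRep_U_cons i h1, by rw [eweight_U_cons]; omega⟩

lemma can_of_mul {x : ℂ} (hx : x ∈ EisZ) {k : ℕ} (h : Can (eβ * x) k) : Can x k := by
  obtain ⟨l, h1, h2⟩ := h
  rcases rep_mul hx h1 with ⟨-, rfl⟩ | ⟨l', rfl, h3⟩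
  · exact ⟨[], eIsRep_nil.2 rfl, Nat.zero_le _⟩
  · exact ⟨l', h3, by rwa [eweight_zero_cons] at h2⟩

lemma two_U (i : ZMod 6) : U i + U i = U (i + 5) + eβ * U (i + 4) := by
  rw [U_add_five, U_add_four]
  linear_combination (1 + ω) * U i * eβ_def + U i * ω_sq

lemma U_add_next (i : ZMod 6) : U i + U (i + 1) = eβ * U (i + 4) := by
  rw [U_add_one, U_add_four]
  linear_combination (1 + ω) * U i * eβ_def + U i * ω_sq

lemma U_add_prev (i : ZMod 6) : U i + U (i + 5) = eβ * U (i + 3) := by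
  rw [U_add_five, U_add_three]
  linear_combination U i * eβ_def

lemma U_add_skip (i : ZMod 6) : U i + U (i + 2) = U (i + 1) := by
  rw [U_add_one, U_add_two]; ring

lemma U_add_skip' (i : ZMod 6) : U i + U (i + 4) = U (i + 5) := by
  rw [U_add_five, U_add_four]; ring

lemma U_add_opp (i : ZMod 6) : U i + U (i + 3) = 0 := by
  rw [U_add_three]; ring

lemma six_cases (i j : ZMod 6) :
    j = i ∨ j = i + 1 ∨ j = i + 2 ∨ j = i + 3 ∨ j = i + 4 ∨ j = i + 5 := by
  revert i j; decide

/-- Adding a unit raises the minimal weight by at most one. -/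
lemma can_add_U {x : ℂ} {k : ℕ} (h : Can x k) (j : ZMod 6) : Can (x + U j) (k + 1) := by
  obtain ⟨l, h1, h2⟩ := h
  induction l generalizing x k j with
  | nil =>
    obtain rfl := eIsRep_nil.1 h1
    have : Can (U j + eβ * 0) (0 + 1) := can_U j ⟨[], eIsRep_nil.2 rfl, by simp [eweight_nil]⟩
    exact (by simpa using this : Can (0 + U j) 1).mono (by omega)
  | cons d l ih =>
    obtain ⟨hd, y, hy, rfl⟩ := eIsRep_cons.1 h1
    rcases mem_eD.1 hd with rfl | ⟨i, rfl⟩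
    · rw [eweight_zero_cons] at h2
      have := can_U j ⟨l, hy, h2⟩
      rwa [show (0 : ℂ) + eβ * y + U j = U j + eβ * y by ring]
    · rw [eweight_U_cons] at h2
      obtain ⟨m, rfl⟩ : ∃ m, k = m + 1 := ⟨k - 1, by omega⟩
      have hm : eweight l ≤ m := by omega
      have hyc : Can y m := ⟨l, hy, hm⟩
      rcases six_cases i j with rfl | rfl | rfl | rfl | rfl | rfl
      · rw [show U j + eβ * y + U j = U (j + 5) + eβ * (y + U (j + 4)) by
          linear_combination two_U j]
        exact can_U _ (ih _ hy hm)
      · rw [show U i + eβ * y + U (i + 1) = eβ * (y + U (i + 4)) by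
          linear_combination U_add_next i]
        exact (can_mul (ih _ hy hm)).mono (by omega)
      · rw [show U i + eβ * y + U (i + 2) = U (i + 1) + eβ * y by
          linear_combination U_add_skip i]
        exact (can_U _ hyc).mono (by omega)
      · rw [show U i + eβ * y + U (i + 3) = eβ * y by linear_combination U_add_opp i]
        exact (can_mul hyc).mono (by omega)
      · rw [show U i + eβ * y + U (i + 4) = U (i + 5) + eβ * y by
          linear_combination U_add_skip' i]
        exact (can_U _ hyc).mono (by omega)
      · rw [show U i + eβ * y + U (i + 5) = eβ * (y + U (i + 3)) by
          linear_combination U_add_prev i]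
        exact (can_mul (ih _ hy hm)).mono (by omega)

/-- Passing from `y` to `β y + c` with `c` a unit never lowers the minimal weight. -/
lemma can_of_U {x : ℂ} (hx : x ∈ EisZ) {i : ZMod 6} {k : ℕ} (h : Can (U i + eβ * x) k) :
    Can x k := by
  obtain ⟨l, h1, h2⟩ := h
  obtain ⟨l', h | h | h⟩ := rep_unit hx h1
  · obtain ⟨rfl, h⟩ := h
    rw [eweight_U_cons] at h2
    exact ⟨l', h, by omega⟩
  · obtain ⟨rfl, h⟩ := h
    rw [eweight_U_cons] at h2
    have := can_add_U ⟨l', h, le_rfl⟩ (i + 3 + 3)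
    rw [show x + U (i + 3) + U (i + 3 + 3) = x by linear_combination U_add_opp (i + 3)] at this
    exact this.mono h2
  · obtain ⟨rfl, h⟩ := h
    rw [eweight_U_cons] at h2
    have := can_add_U ⟨l', h, le_rfl⟩ (i + 4 + 3)
    rw [show x + U (i + 4) + U (i + 4 + 3) = x by linear_combination U_add_opp (i + 4)] at this
    exact this.mono h2

/-! ### Counting representations of given weight -/

/-- The normalized representations of `x` with exactly `k` nonzero digits. -/
def reps (x : ℂ) (k : ℕ) : Set (List ℂ) := {l | eIsRep x l ∧ eNormalized l ∧ eweight l = k}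

/-- The number of normalized representations of `x` with exactly `k` nonzero digits. It is
`ℕ∞`-valued so that no finiteness has to be established before the count is known. -/
def repCount (x : ℂ) (k : ℕ) : ℕ∞ := (reps x k).encard

lemma repCount_eq_zero {x : ℂ} {k : ℕ} (h : ¬ Can x k) : repCount x k = 0 := by
  rw [repCount, Set.encard_eq_zero, Set.eq_empty_iff_forall_notMem]
  rintro l ⟨h1, -, h3⟩
  exact h ⟨l, h1, h3.le⟩

lemma norm_U_cons (i : ZMod 6) (l : List ℂ) : eNormalized (U i :: l) ↔ eNormalized l := by
  cases l with
  | nil => simp [eNormalized, U_ne]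
  | cons d l => simp [eNormalized]

lemma norm_zero_cons {l : List ℂ} (hl : l ≠ []) : eNormalized (0 :: l) ↔ eNormalized l := by
  cases l with
  | nil => exact absurd rfl hl
  | cons d l => simp [eNormalized]

lemma repCount_mul {x : ℂ} (hx : x ∈ EisZ) (k : ℕ) : repCount (eβ * x) k = repCount x k := by
  by_cases h0 : x = 0
  · simp [h0]
  have : reps (eβ * x) k = (fun l => (0 : ℂ) :: l) '' reps x k := by
    ext l
    constructor
    · rintro ⟨h1, h2, h3⟩
      rcases rep_mul hx h1 with ⟨-, h⟩ | ⟨l', rfl, h⟩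
      · exact absurd h h0
      · have hl : l' ≠ [] := by
          rintro rfl
          exact h0 (eIsRep_nil.1 h)
        exact ⟨l', ⟨h, (norm_zero_cons hl).1 h2, by rwa [eweight_zero_cons] at h3⟩, rfl⟩
    · rintro ⟨l', ⟨h1, h2, h3⟩, rfl⟩
      have hl : l' ≠ [] := by
        rintro rfl
        exact h0 (eIsRep_nil.1 h1)
      exact ⟨eIsRep_zero_cons h1, (norm_zero_cons hl).2 h2, by rwa [eweight_zero_cons]⟩
  rw [repCount, this, (List.cons_injective).encard_image, repCount]

lemma repCount_unit_zero {x : ℂ} (hx : x ∈ EisZ) (i : ZMod 6) : repCount (U i + eβ * x) 0 = 0 := by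
  apply repCount_eq_zero
  rintro ⟨l, h1, h2⟩
  obtain ⟨l', ⟨rfl, -⟩ | ⟨rfl, -⟩ | ⟨rfl, -⟩⟩ := rep_unit hx h1 <;>
    rw [eweight_U_cons] at h2 <;> omega

lemma U_inj {i j : ZMod 6} (h : U i = U j) : i = j :=
  (head_inj eisZ_zero eisZ_zero (by simpa using h)).1

lemma repCount_unit_succ {x : ℂ} (hx : x ∈ EisZ) (i : ZMod 6) (k : ℕ) :
    repCount (U i + eβ * x) (k + 1) =
      repCount x k + repCount (x + U (i + 3)) k + repCount (x + U (i + 4)) k := by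
  have hset : reps (U i + eβ * x) (k + 1) =
      ((fun l => U i :: l) '' reps x k ∪ (fun l => U (i + 2) :: l) '' reps (x + U (i + 3)) k) ∪
        (fun l => U (i + 4) :: l) '' reps (x + U (i + 4)) k := by
    ext l
    constructor
    · rintro ⟨h1, h2, h3⟩
      obtain ⟨l', ⟨rfl, h⟩ | ⟨rfl, h⟩ | ⟨rfl, h⟩⟩ := rep_unit hx h1 <;>
        rw [eweight_U_cons] at h3 <;> rw [norm_U_cons] at h2
      · exact Or.inl (Or.inl ⟨l', ⟨h, h2, by omega⟩, rfl⟩)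
      · exact Or.inl (Or.inr ⟨l', ⟨h, h2, by omega⟩, rfl⟩)
      · exact Or.inr ⟨l', ⟨h, h2, by omega⟩, rfl⟩
    · rintro ((⟨l', ⟨h1, h2, h3⟩, rfl⟩ | ⟨l', ⟨h1, h2, h3⟩, rfl⟩) | ⟨l', ⟨h1, h2, h3⟩, rfl⟩)
      · exact ⟨eIsRep_U_cons i h1, (norm_U_cons _ _).2 h2, by rw [eweight_U_cons, h3]⟩
      · refine ⟨?_, (norm_U_cons _ _).2 h2, by rw [eweight_U_cons, h3]⟩
        have := eIsRep_U_cons (i + 2) h1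
        rwa [show U (i + 2) + eβ * (x + U (i + 3)) = U i + eβ * x by
          rw [U_add_two, U_add_three]
          linear_combination - U i * eβ_def] at this
      · refine ⟨?_, (norm_U_cons _ _).2 h2, by rw [eweight_U_cons, h3]⟩
        have := eIsRep_U_cons (i + 4) h1
        rwa [show U (i + 4) + eβ * (x + U (i + 4)) = U i + eβ * x by
          rw [U_add_four]
          linear_combination - (1 + ω) * U i * eβ_def - U i * ω_sq] at this
  have key : ∀ {a b : ZMod 6} (s t : Set (List ℂ)), a ≠ b →
      Disjoint ((fun l => U a :: l) '' s) ((fun l => U b :: l) '' t) := by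
    intro a b s t hab
    rw [Set.disjoint_left]
    rintro _ ⟨l, -, rfl⟩ ⟨l', -, h⟩
    exact hab (U_inj (List.cons.inj h).1.symm)
  obtain ⟨n1, n2, n3⟩ : i ≠ i + 2 ∧ i ≠ i + 4 ∧ i + 2 ≠ i + 4 := by
    clear hset
    revert i
    decide
  rw [repCount, hset, Set.encard_union_eq, Set.encard_union_eq (key _ _ n1),
    (List.cons_injective).encard_image, (List.cons_injective).encard_image,
    (List.cons_injective).encard_image]
  · rfl
  · exact Set.disjoint_union_left.2 ⟨key _ _ n2, key _ _ n3⟩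

/-! ### Words for 2-NAFs and the recursion for the counts -/

/-- The value of a word encoding a 2-NAF, lowest position first: `none` is a digit `0`, and
`some i` is the block consisting of the digit `U i` followed by the digit `0` forced on the next
position. -/
def val : List (Option (ZMod 6)) → ℂ
  | [] => 0
  | none :: W => eβ * val W
  | some i :: W => U i + eβ * (eβ * val W)

/-- The number of nonzero digits of the 2-NAF encoded by a word. -/
def wt : List (Option (ZMod 6)) → ℕ
  | [] => 0
  | none :: W => wt W
  | some _ :: W => wt W + 1

/-- One step of the recursion for the second component of `cnt`. -/
def stepA (i : ZMod 6) (f : ℕ) (a : ZMod 6 → ℕ) (j : ZMod 6) : ℕ :=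
  (![a (i + 1), a (i + 1) + a (i + 2), 0, f, 0, a i + a (i + 1)] : Fin 6 → ℕ) (j - i)

/-- For `y = val W` of weight `n`: the first component is the number of optimal representations
of `y`, and the second one maps `j` to the number of normalized representations of `y + U j` of
weight `n - 1` (zero if `n = 0`). That these recursive values are the counts is `count_spec`. -/
def cnt : List (Option (ZMod 6)) → ℕ × (ZMod 6 → ℕ)
  | [] => (1, fun _ => 0)
  | none :: W => ((cnt W).1, fun _ => 0)
  | some i :: W =>
    ((cnt W).1 + (cnt W).2 i + 2 * (cnt W).2 (i + 1) + (cnt W).2 (i + 2),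
      stepA i (cnt W).1 (cnt W).2)

lemma stepA_zero (i : ZMod 6) (f : ℕ) (a : ZMod 6 → ℕ) : stepA i f a i = a (i + 1) := by
  rw [stepA, sub_self]; rfl

lemma stepA_one (i : ZMod 6) (f : ℕ) (a : ZMod 6 → ℕ) :
    stepA i f a (i + 1) = a (i + 1) + a (i + 2) := by
  rw [stepA, add_sub_cancel_left]; rfl

lemma stepA_two (i : ZMod 6) (f : ℕ) (a : ZMod 6 → ℕ) : stepA i f a (i + 2) = 0 := by
  rw [stepA, add_sub_cancel_left]; rfl

lemma stepA_three (i : ZMod 6) (f : ℕ) (a : ZMod 6 → ℕ) : stepA i f a (i + 3) = f := by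
  rw [stepA, add_sub_cancel_left]; rfl

lemma stepA_four (i : ZMod 6) (f : ℕ) (a : ZMod 6 → ℕ) : stepA i f a (i + 4) = 0 := by
  rw [stepA, add_sub_cancel_left]; rfl

lemma stepA_five (i : ZMod 6) (f : ℕ) (a : ZMod 6 → ℕ) :
    stepA i f a (i + 5) = a i + a (i + 1) := by
  rw [stepA, add_sub_cancel_left]; rfl

lemma eisZ_val (W : List (Option (ZMod 6))) : val W ∈ EisZ := by
  induction W with
  | nil => exact eisZ_zero
  | cons o W ih =>
    cases o with
    | none => exact eisZ_mul ih
    | some i => exact eisZ_add (eisZ_U i) (eisZ_mul (eisZ_mul ih))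

/-- `z` has minimal weight `n`, it has `f` optimal representations, and `a` lists its near counts:
`a j` is the number of normalized representations of `z + U j` of weight `n - 1`
(zero if `n = 0`). -/
structure CountSpec (z : ℂ) (n f : ℕ) (a : ZMod 6 → ℕ) : Prop where
  can : Can z n
  min : ∀ k, Can z k → n ≤ k
  opt : repCount z n = f
  near : ∀ j k, n = k + 1 → repCount (z + U j) k = a j
  near_zero : n = 0 → ∀ j, a j = 0

/-- Representations of `β z + U m` that are no heavier than those of `z`. -/
lemma CountSpec.unit {z : ℂ} {n f : ℕ} {a : ZMod 6 → ℕ} (h : CountSpec z n f a) (hz : z ∈ EisZ)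
    (m : ZMod 6) : repCount (U m + eβ * z) n = (a (m + 3) + a (m + 4) : ℕ) := by
  cases n with
  | zero => rw [repCount_unit_zero hz, h.near_zero rfl, h.near_zero rfl]; rfl
  | succ k =>
    rw [repCount_unit_succ hz, h.near _ k rfl, h.near _ k rfl, repCount_eq_zero, zero_add]
    · push_cast; rfl
    · intro hc
      have := h.min k hc
      omega

lemma CountSpec.min_some {z : ℂ} {n f : ℕ} {a : ZMod 6 → ℕ} (h : CountSpec z n f a)
    (hz : z ∈ EisZ) (i : ZMod 6) {k : ℕ} (hk : Can (U i + eβ * (eβ * z)) k) : n + 1 ≤ k := by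
  obtain ⟨l, h1, h2⟩ := hk
  obtain ⟨l', ⟨rfl, h3⟩ | ⟨rfl, h3⟩ | ⟨rfl, h3⟩⟩ := rep_unit (eisZ_mul hz) h1 <;>
    rw [eweight_U_cons] at h2
  · have := h.min _ (can_of_mul hz ⟨l', h3, le_rfl⟩)
    omega
  · rw [add_comm] at h3
    have := h.min _ (can_of_U hz ⟨l', h3, le_rfl⟩)
    omega
  · rw [add_comm] at h3
    have := h.min _ (can_of_U hz ⟨l', h3, le_rfl⟩)
    omega

lemma CountSpec.mul {z : ℂ} {n f : ℕ} {a : ZMod 6 → ℕ} (h : CountSpec z n f a)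
    (hz : z ∈ EisZ) : CountSpec (eβ * z) n f (fun _ => 0) where
  can := can_mul h.can
  min k hk := h.min k (can_of_mul hz hk)
  opt := by rw [repCount_mul hz, h.opt]
  near j k hk := by
    rw [add_comm, repCount_eq_zero]
    · rfl
    · intro hc
      have := h.min k (can_of_U hz hc)
      omega
  near_zero _ _ := rfl

lemma CountSpec.some {z : ℂ} {n f : ℕ} {a : ZMod 6 → ℕ} (h : CountSpec z n f a)
    (hz : z ∈ EisZ) (i : ZMod 6) :
    CountSpec (U i + eβ * (eβ * z)) (n + 1) (f + a i + 2 * a (i + 1) + a (i + 2))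
      (stepA i f a) where
  can := can_U i (can_mul h.can)
  min k hk := h.min_some hz i hk
  opt := by
    rw [repCount_unit_succ (eisZ_mul hz), repCount_mul hz, h.opt, add_comm (eβ * z),
      add_comm (eβ * z), h.unit hz, h.unit hz]
    have e1 : i + 3 + 3 = i := by revert i; decide
    have e2 : i + 3 + 4 = i + 1 := by revert i; decide
    have e3 : i + 4 + 3 = i + 1 := by revert i; decide
    have e4 : i + 4 + 4 = i + 2 := by revert i; decide
    rw [e1, e2, e3, e4]
    norm_cast
    ring
  near j k hk := by
    obtain rfl : n = k := by omega
    rcases six_cases i j with rfl | rfl | rfl | rfl | rfl | rfl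
    · rw [stepA_zero]
      have e : U j + eβ * (eβ * z) + U j = U (j + 3) + eβ * (eβ * (z + U (j + 1))) := by
        rw [U_add_three, U_add_one, eβ]
        linear_combination (2 - ω) * U j * ω_sq
      have hz' : z + U (j + 1) ∈ EisZ := eisZ_add hz (eisZ_U _)
      rw [e]
      cases n with
      | zero => rw [repCount_unit_zero (eisZ_mul hz'), h.near_zero rfl]; rfl
      | succ m =>
        rw [repCount_unit_succ (eisZ_mul hz'), repCount_mul hz', h.near _ m rfl]
        -- The other two quotients are of the form `β z + unit`, hence too heavy.
        have e1 : eβ * (z + U (j + 1)) + U (j + 3 + 3) = U (j + 4) + eβ * z := by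
          rw [U_add_three, U_add_three, U_add_one, U_add_four, eβ]
          linear_combination U j * ω_sq
        have e2 : eβ * (z + U (j + 1)) + U (j + 3 + 4) = U (j + 3) + eβ * z := by
          rw [U_add_four, U_add_three, U_add_one, eβ]
          linear_combination U j * ω_sq
        have hno : ∀ i, ¬ Can (U i + eβ * z) m := by
          intro i hc
          have := h.min m (can_of_U hz hc)
          omega
        rw [e1, e2, repCount_eq_zero (hno _), repCount_eq_zero (hno _)]
        simp
    · have hz' : U (i + 4) + eβ * z ∈ EisZ := eisZ_add (eisZ_U _) (eisZ_mul hz)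
      have e : U i + eβ * (eβ * z) + U (i + 1) = eβ * (U (i + 4) + eβ * z) := by
        linear_combination U_add_next i
      have e3 : i + 4 + 3 = i + 1 := by clear hz' e hk; revert i; decide
      have e4 : i + 4 + 4 = i + 2 := by clear hz' e e3 hk; revert i; decide
      rw [stepA_one, e, repCount_mul hz', h.unit hz, e3, e4]
    · have e : U i + eβ * (eβ * z) + U (i + 2) = U (i + 1) + eβ * (eβ * z) := by
        linear_combination U_add_skip i
      rw [stepA_two, e, repCount_eq_zero]
      · rfl
      · intro hc
        have := h.min_some hz _ hc
        omega
    · have e : U i + eβ * (eβ * z) + U (i + 3) = eβ * (eβ * z) := by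
        linear_combination U_add_opp i
      rw [stepA_three, e, repCount_mul (eisZ_mul hz), repCount_mul hz, h.opt]
    · have e : U i + eβ * (eβ * z) + U (i + 4) = U (i + 5) + eβ * (eβ * z) := by
        linear_combination U_add_skip' i
      rw [stepA_four, e, repCount_eq_zero]
      · rfl
      · intro hc
        have := h.min_some hz _ hc
        omega
    · have hz' : U (i + 3) + eβ * z ∈ EisZ := eisZ_add (eisZ_U _) (eisZ_mul hz)
      have e : U i + eβ * (eβ * z) + U (i + 5) = eβ * (U (i + 3) + eβ * z) := by
        linear_combination U_add_prev i
      have e3 : i + 3 + 3 = i := by clear hz' e hk; revert i; decide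
      have e4 : i + 3 + 4 = i + 1 := by clear hz' e e3 hk; revert i; decide
      rw [stepA_five, e, repCount_mul hz', h.unit hz, e3, e4]
  near_zero h0 := by omega

lemma count_spec (W : List (Option (ZMod 6))) :
    CountSpec (val W) (wt W) (cnt W).1 (cnt W).2 := by
  induction W with
  | nil =>
    refine ⟨⟨[], eIsRep_nil.2 rfl, le_rfl⟩, fun k _ => Nat.zero_le k, ?_, ?_, fun _ _ => rfl⟩
    · have : reps 0 0 = {[]} := by
        ext l
        constructor
        · rintro ⟨-, h2, h3⟩
          -- A string without nonzero digits whose leading digit is nonzero is empty.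
          have h4 : ∀ d ∈ l, d = 0 := by simpa [eweight] using h3
          cases hl : l.getLast? with
          | none => simpa using hl
          | some d =>
            have := h4 d (List.mem_of_getLast? hl)
            exact absurd (this ▸ hl) h2
        · rintro rfl
          exact ⟨eIsRep_nil.2 rfl, by simp [eNormalized], rfl⟩
      change (reps 0 0).encard = ((1 : ℕ) : ℕ∞)
      rw [this]
      simp
    · intro j k hk
      exact absurd hk (by simp [wt])
  | cons o W ih =>
    cases o with
    | none => exact ih.mul (eisZ_val W)
    | some i => exact ih.some (eisZ_val W) i

lemma enumOpt_val (W : List (Option (ZMod 6))) : enumOpt (val W) = (cnt W).1 := by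
  have h := count_spec W
  have hset : {l | eOptimal (val W) l} = reps (val W) (wt W) := by
    ext l
    constructor
    · rintro ⟨h1, h2, h3⟩
      obtain ⟨l', h4, h5⟩ := h.can
      exact ⟨h1, h2, le_antisymm ((h3 l' h4).trans h5) (h.min _ ⟨l, h1, le_rfl⟩)⟩
    · rintro ⟨h1, h2, h3⟩
      exact ⟨h1, h2, fun l' hl' => h3 ▸ h.min _ ⟨l', hl', le_rfl⟩⟩
  have h1 : ({l | eOptimal (val W) l} : Set (List ℂ)).ncard = (cnt W).1 := by
    rw [hset, Set.ncard, ← repCount, h.opt]; rfl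
  exact h1

lemma eNAF_tail {d : ℂ} {l : List ℂ} (h : eNAF 2 (d :: l)) : eNAF 2 l := by
  intro j k hjk hk hj
  have := h (j + 1) (k + 1) (by omega) (by omega) (by simpa using hj)
  simpa using this

/-- Every 2-NAF is encoded by a word. -/
lemma exists_word (m : ℕ) : ∀ (l : List ℂ) (x : ℂ), l.length ≤ m → eIsRep x l → eNAF 2 l →
    ∃ W, val W = x ∧ wt W = eweight l := by
  induction m with
  | zero =>
    intro l x hl h _
    obtain rfl : l = [] := List.length_eq_zero_iff.1 (by omega)
    exact ⟨[], (eIsRep_nil.1 h).symm, rfl⟩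
  | succ m ih =>
    intro l x hl h hN
    cases l with
    | nil => exact ⟨[], (eIsRep_nil.1 h).symm, rfl⟩
    | cons d l =>
      obtain ⟨hd, y, hy, rfl⟩ := eIsRep_cons.1 h
      simp only [List.length_cons] at hl
      rcases mem_eD.1 hd with rfl | ⟨i, rfl⟩
      · obtain ⟨W, rfl, h2⟩ := ih l y (by omega) hy (eNAF_tail hN)
        exact ⟨none :: W, by simp [val], by rw [eweight_zero_cons, wt, h2]⟩
      · cases l with
        | nil =>
          obtain rfl := eIsRep_nil.1 hy
          exact ⟨[some i], by simp [val], by rw [eweight_U_cons]; rfl⟩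
        | cons e l =>
          obtain rfl : e = 0 := by
            simpa using hN 0 1 (by omega) (by omega) (by simpa using U_ne i)
          obtain ⟨-, z, hz, rfl⟩ := eIsRep_cons.1 hy
          simp only [List.length_cons] at hl
          obtain ⟨W, rfl, h2⟩ := ih l z (by omega) hz (eNAF_tail (eNAF_tail hN))
          exact ⟨some i :: W, by simp [val], by rw [eweight_U_cons, eweight_zero_cons, wt, h2]⟩

lemma eNAF_zero_cons {l : List ℂ} (h : eNAF 2 l) : eNAF 2 (0 :: l) := by
  intro j k hjk hk hj
  cases j with
  | zero => simp at hj
  | succ j =>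
    cases k with
    | zero => omega
    | succ k =>
      have := h j k (by omega) (by omega) (by simpa using hj)
      simpa using this

lemma eNAF_block {d : ℂ} {l : List ℂ} (h : eNAF 2 l) : eNAF 2 (d :: 0 :: l) := by
  intro j k hjk hk hj
  cases j with
  | zero =>
    obtain rfl : k = 1 := by omega
    simp
  | succ j =>
    cases k with
    | zero => omega
    | succ k =>
      have := eNAF_zero_cons h j k (by omega) (by omega) (by simpa using hj)
      simpa using this

lemma exists_naf (W : List (Option (ZMod 6))) :
    ∃ l, eIsRep (val W) l ∧ eNAF 2 l ∧ eweight l = wt W := by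
  induction W with
  | nil => exact ⟨[], eIsRep_nil.2 rfl, by simp [eNAF], rfl⟩
  | cons o W ih =>
    obtain ⟨l, h1, h2, h3⟩ := ih
    cases o with
    | none =>
      exact ⟨0 :: l, eIsRep_zero_cons h1, eNAF_zero_cons h2, by rw [eweight_zero_cons, h3]; rfl⟩
    | some i =>
      exact ⟨U i :: 0 :: l, eIsRep_U_cons i (eIsRep_zero_cons h1), eNAF_block h2,
        by rw [eweight_U_cons, eweight_zero_cons, h3]; rfl⟩

/-! ### The maximal count -/

/-- The sequence `s` shifted by one: `sP (n + 1) = s_n`, and `sP 0 = 0`. -/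
def sP (n : ℕ) : ℕ := (3 * 2 ^ n + 1) / 7

/-- The sequence `s` shifted by two: `sQ (n + 2) = s_n`, and `sQ 0 = sQ 1 = 0`. -/
def sQ (n : ℕ) : ℕ := (3 * 2 ^ n + 2) / 14

/-- Half of the increment of `s`: `s_{n+1} = s_n + 2 * sT (n + 1)`. -/
def sT (n : ℕ) : ℕ := (3 * 2 ^ n + 4) / 14

lemma pow_mod (n : ℕ) : (n % 3 = 0 ∧ 2 ^ n % 7 = 1) ∨ (n % 3 = 1 ∧ 2 ^ n % 7 = 2) ∨
    (n % 3 = 2 ∧ 2 ^ n % 7 = 4) := by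
  induction n with
  | zero => simp
  | succ n ih => rw [pow_succ]; omega

lemma sseq_succ (n : ℕ) : sseq (n + 1) = sseq n + 2 * sT (n + 1) := by
  have := pow_mod n
  simp only [sseq, sT, pow_succ]
  omega

lemma sP_succ (n : ℕ) : sP (n + 1) = sseq n := by
  simp only [sseq, sP, pow_succ]
  omega

lemma sQ_succ {n : ℕ} : sQ (n + 1) = sP n := by
  simp only [sP, sQ, pow_succ]
  omega

/-- Bounds on the near counts `a` of an element of weight `n` congruent to `U i` modulo `β²`. For an
element divisible by `β` the near counts vanish, and the bounds hold for every `i`. -/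
structure Bounds (n : ℕ) (a : ZMod 6 → ℕ) (i : ZMod 6) : Prop where
  h5 : a (i + 5) ≤ sT n
  h1 : a (i + 1) ≤ sT n
  h0 : a i ≤ sQ n
  h50 : a (i + 5) + a i ≤ sT (n + 1)
  h01 : a i + a (i + 1) ≤ sT (n + 1)
  h3 : a (i + 3) ≤ sP n
  h2 : a (i + 2) = 0
  h4 : a (i + 4) = 0

/-- The values of `a` at three consecutive places, as seen from a base point `i`. -/
lemma shift_cases (a : ZMod 6 → ℕ) (i j : ZMod 6) :
    (j = i ∧ a j = a i ∧ a (j + 1) = a (i + 1) ∧ a (j + 2) = a (i + 2)) ∨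
    (j = i + 1 ∧ a j = a (i + 1) ∧ a (j + 1) = a (i + 2) ∧ a (j + 2) = a (i + 3)) ∨
    (j = i + 2 ∧ a j = a (i + 2) ∧ a (j + 1) = a (i + 3) ∧ a (j + 2) = a (i + 4)) ∨
    (j = i + 3 ∧ a j = a (i + 3) ∧ a (j + 1) = a (i + 4) ∧ a (j + 2) = a (i + 5)) ∨
    (j = i + 4 ∧ a j = a (i + 4) ∧ a (j + 1) = a (i + 5) ∧ a (j + 2) = a i) ∨
    (j = i + 5 ∧ a j = a (i + 5) ∧ a (j + 1) = a i ∧ a (j + 2) = a (i + 1)) := by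
  have e : ∀ i : ZMod 6, i + 1 + 1 = i + 2 ∧ i + 1 + 2 = i + 3 ∧ i + 2 + 1 = i + 3 ∧
      i + 2 + 2 = i + 4 ∧ i + 3 + 1 = i + 4 ∧ i + 3 + 2 = i + 5 ∧ i + 4 + 1 = i + 5 ∧
      i + 4 + 2 = i ∧ i + 5 + 1 = i ∧ i + 5 + 2 = i + 1 := by decide
  obtain ⟨e1, e2, e3, e4, e5, e6, e7, e8, e9, e10⟩ := e i
  rcases six_cases i j with rfl | rfl | rfl | rfl | rfl | rfl
  · simp
  · simp [e1, e2]
  · simp [e3, e4]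
  · simp [e5, e6]
  · simp [e7, e8]
  · simp [e9, e10]

/-- The bounds on `a` at the three places entering the recursion for a new digit `U j`. -/
lemma Bounds.triple {n : ℕ} {a : ZMod 6 → ℕ} {i : ZMod 6} (h : Bounds n a i) (j : ZMod 6) :
    a j + a (j + 1) ≤ sT (n + 1) ∧ a (j + 1) + a (j + 2) ≤ sT (n + 1) ∧
      a (j + 1) ≤ sQ (n + 1) ∧ a j + 2 * a (j + 1) ≤ sT (n + 2) ∧
      2 * a (j + 1) + a (j + 2) ≤ sT (n + 2) := by
  obtain ⟨h5, h1, h0, h50, h01, h3, h2, h4⟩ := h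
  have := pow_mod n
  have : 0 < 2 ^ n := by positivity
  simp only [sT, sQ, sP, pow_succ] at *
  rcases shift_cases a i j with h | h | h | h | h | h <;> obtain ⟨-, e1, e2, e3⟩ := h <;>
    rw [e1, e2, e3] <;> refine ⟨?_, ?_, ?_, ?_, ?_⟩ <;> omega

lemma Bounds.zero (n : ℕ) : Bounds n (fun _ => 0) 0 := by
  constructor <;> simp

lemma bounds_cnt (W : List (Option (ZMod 6))) :
    (cnt W).1 ≤ sseq (wt W) ∧ ∃ i, Bounds (wt W) (cnt W).2 i := by
  induction W with
  | nil => exact ⟨by simp [cnt, wt, sseq], 0, Bounds.zero _⟩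
  | cons o W ih =>
    obtain ⟨hf, i, hi⟩ := ih
    cases o with
    | none => exact ⟨hf, 0, Bounds.zero _⟩
    | some j =>
      obtain ⟨t1, t2, t3, t4, t5⟩ := hi.triple j
      refine ⟨?_, j, ?_⟩
      · simp only [cnt, wt, sseq_succ]
        omega
      · simp only [cnt, wt]
        constructor
        · rw [stepA_five]; exact t1
        · rw [stepA_one]; exact t2
        · rw [stepA_zero]; exact t3
        · rw [stepA_five, stepA_zero, add_assoc, ← two_mul]; exact t4
        · rw [stepA_zero, stepA_one, ← add_assoc, ← two_mul]; exact t5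
        · rw [stepA_three, sP_succ]; exact hf
        · rw [stepA_two]
        · rw [stepA_four]

/-- The shape of the counts of an extremal element of weight `n` with lowest digit `U i`. -/
structure Extremal (n : ℕ) (c : ℕ × (ZMod 6 → ℕ)) (i : ZMod 6) : Prop where
  hf : c.1 = sseq n
  h5 : c.2 (i + 5) = sT n
  h1 : c.2 (i + 1) = sT n
  h0 : c.2 i ≤ sQ n
  h0_two : n % 3 = 2 → c.2 i = sQ n
  h0_zero : n % 3 = 0 → 2 * c.2 i = sT n
  h3 : c.2 (i + 3) = sP n
  h2 : c.2 (i + 2) = 0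
  h4 : c.2 (i + 4) = 0

/-- The rotation from the lowest digit of an extremal element of weight `n` to the digit prepended
to it. Only at `n = 3` is there a choice, made by `b`. -/
def off (n : ℕ) (b : Bool) : ZMod 6 := if n % 3 = 2 ∨ (n = 3 ∧ b = true) then 5 else 2

/-- The words encoding the extremal elements: weight, lowest digit, and the choice made at
weight `3`. -/
def extWord : ℕ → ZMod 6 → Bool → List (Option (ZMod 6))
  | 0, _, _ => []
  | n + 1, i, b => some i :: extWord n (i - off n b) b

lemma wt_ext (n : ℕ) (i : ZMod 6) (b : Bool) : wt (extWord n i b) = n := by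
  induction n generalizing i with
  | zero => rfl
  | succ n ih => rw [extWord, wt, ih]

/-- An extremal element has an extremal tail, and its lowest digit meets the bounds of
`Bounds.triple` with equality. -/
lemma tail_of_max {W : List (Option (ZMod 6))} {j : ZMod 6}
    (h : (cnt (some j :: W)).1 = sseq (wt W + 1)) :
    (cnt W).1 = sseq (wt W) ∧ (cnt W).2 j + (cnt W).2 (j + 1) = sT (wt W + 1) ∧
      (cnt W).2 (j + 1) + (cnt W).2 (j + 2) = sT (wt W + 1) := by
  obtain ⟨hf, i, hi⟩ := bounds_cnt W
  obtain ⟨t1, t2, -⟩ := hi.triple j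
  rw [sseq_succ] at h
  simp only [cnt] at h
  omega

/-- Prepending `U j` to an extremal element yields an extremal one only for `j = i + off n b`. -/
lemma Extremal.step {n : ℕ} (hn : 1 ≤ n) {c : ℕ × (ZMod 6 → ℕ)} {i j : ZMod 6}
    (h : Extremal n c i) (hj1 : c.2 j + c.2 (j + 1) = sT (n + 1))
    (hj2 : c.2 (j + 1) + c.2 (j + 2) = sT (n + 1)) : ∃ b, j = i + off n b := by
  obtain ⟨hf, h5, h1, h0, h0t, h0z, h3, h2, h4⟩ := h
  have hp := pow_mod n
  have hp2 : 2 ≤ 2 ^ n := Nat.le_self_pow (by omega) 2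
  have hev : 2 ^ n % 2 = 0 := Nat.mod_eq_zero_of_dvd (dvd_pow_self 2 (by omega))
  have key : (n % 3 ≠ 2 ∧ j = i + 2) ∨ ((n % 3 = 2 ∨ n = 3) ∧ j = i + 5) := by
    by_cases h30 : n = 3
    · subst h30
      simp only [sT, sQ, sP] at *
      rcases shift_cases c.2 i j with h | h | h | h | h | h <;> obtain ⟨e0, e1, e2, e3⟩ := h <;>
        rw [e1, e2] at hj1 <;> rw [e2, e3] at hj2 <;> first | omega | simp [e0]
    · have hp3 : n < 3 ∨ 16 ≤ 2 ^ n := by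
        rcases Nat.lt_or_ge n 3 with h | h
        · exact Or.inl h
        · exact Or.inr (Nat.pow_le_pow_right (n := 2) (i := 4) (by norm_num) (by omega))
      simp only [sT, sQ, sP, pow_succ] at *
      rcases shift_cases c.2 i j with h | h | h | h | h | h <;> obtain ⟨e0, e1, e2, e3⟩ := h <;>
        rw [e1, e2] at hj1 <;> rw [e2, e3] at hj2
      · omega
      · omega
      · exact Or.inl ⟨by omega, e0⟩
      · omega
      · omega
      · refine Or.inr ⟨?_, e0⟩
        by_contra hne
        by_cases hc : n % 3 = 0
        · have := h0z hc
          omega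
        · omega
  rcases key with ⟨k1, k2⟩ | ⟨k1 | k1, k2⟩
  · exact ⟨false, by simp [off, k1, k2]⟩
  · exact ⟨false, by simp [off, k1, k2]⟩
  · exact ⟨true, by simp [off, k1, k2]⟩

lemma Extremal.cons {n : ℕ} (hn : 1 ≤ n) {W : List (Option (ZMod 6))} {i : ZMod 6}
    (h : Extremal n (cnt W) i) (b : Bool) :
    Extremal (n + 1) (cnt (some (i + off n b) :: W)) (i + off n b) := by
  obtain ⟨hf, h5, h1, h0, h0t, h0z, h3, h2, h4⟩ := h
  set a := (cnt W).2 with ha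
  set j := i + off n b with hj
  have hp := pow_mod n
  have hp2 : 2 ≤ 2 ^ n := Nat.le_self_pow (by omega) 2
  have hev : 2 ^ n % 2 = 0 := Nat.mod_eq_zero_of_dvd (dvd_pow_self 2 (by omega))
  have key : a j + a (j + 1) = sT (n + 1) ∧ a (j + 1) + a (j + 2) = sT (n + 1) ∧
      a (j + 1) ≤ sQ (n + 1) ∧ ((n + 1) % 3 = 2 → a (j + 1) = sQ (n + 1)) ∧
      ((n + 1) % 3 = 0 → 2 * a (j + 1) = sT (n + 1)) := by
    by_cases hc : n % 3 = 2 ∨ (n = 3 ∧ b = true)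
    · have hj5 : j = i + 5 := by rw [hj, off, if_pos hc]
      have e : ∀ i : ZMod 6, i + 5 + 1 = i ∧ i + 5 + 2 = i + 1 := by decide
      rw [hj5, (e i).1, (e i).2]
      rcases hc with hc | ⟨rfl, -⟩
      · have h0' := h0t hc
        simp only [sT, sQ, sP, pow_succ] at *
        omega
      · have h0' := h0z rfl
        simp only [sT, sQ, sP] at *
        omega
    · have hj2 : j = i + 2 := by rw [hj, off, if_neg hc]
      have e : ∀ i : ZMod 6, i + 2 + 1 = i + 3 ∧ i + 2 + 2 = i + 4 := by decide
      rw [hj2, (e i).1, (e i).2]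
      have hn2 : n % 3 ≠ 2 := fun h => hc (Or.inl h)
      simp only [sT, sQ, sP, pow_succ] at *
      omega
  obtain ⟨k1, k2, k3, k4, k5⟩ := key
  constructor
  · simp only [cnt, sseq_succ, ← ha]
    omega
  · simp only [cnt, stepA_five]; exact k1
  · simp only [cnt, stepA_one]; exact k2
  · simp only [cnt, stepA_zero]; exact k3
  · simp only [cnt, stepA_zero]; exact k4
  · simp only [cnt, stepA_zero]; exact k5
  · simp only [cnt, stepA_three, sP_succ]; exact hf
  · simp only [cnt, stepA_two]
  · simp only [cnt, stepA_four]

lemma val_some (i : ZMod 6) (W : List (Option (ZMod 6))) :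
    val (some i :: W) = U i + eβ * (eβ * val W) := rfl

lemma wt_zero {W : List (Option (ZMod 6))} (h : wt W = 0) :
    val W = 0 ∧ cnt W = (1, fun _ => 0) := by
  induction W with
  | nil => exact ⟨rfl, rfl⟩
  | cons o W ih =>
    cases o with
    | none =>
      obtain ⟨h1, h2⟩ := ih h
      exact ⟨by rw [val, h1, mul_zero], by rw [cnt, h2]⟩
    | some i => simp [wt] at h

lemma extremal_one {W : List (Option (ZMod 6))} (h : wt W = 0) (i : ZMod 6) :
    Extremal 1 (cnt (some i :: W)) i := by
  have h2 := (wt_zero h).2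
  constructor <;> simp only [cnt, h2, stepA_zero, stepA_one, stepA_two, stepA_three, stepA_four,
    stepA_five, sseq, sT, sQ, sP] <;> norm_num

lemma extremal_ext (n : ℕ) (i : ZMod 6) (b : Bool) :
    Extremal (n + 1) (cnt (extWord (n + 1) i b)) i := by
  induction n generalizing i with
  | zero => exact extremal_one rfl i
  | succ n ih =>
    have := (ih (i - off (n + 1) b)).cons (by omega) b
    rwa [sub_add_cancel] at this

lemma ext_indep (n : ℕ) (hn : n ≤ 3) (i : ZMod 6) (b b' : Bool) :
    extWord n i b = extWord n i b' := by
  induction n generalizing i with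
  | zero => rfl
  | succ n ih =>
    have : off n b = off n b' := by
      have : n ≠ 3 := by omega
      simp [off, this]
    rw [extWord, extWord, this, ih (by omega)]

/-- Elements attaining `s_{n+1}` are the values of the words `extWord`. -/
lemma eq_ext_of_max (n : ℕ) : ∀ (W : List (Option (ZMod 6))) (i : ZMod 6), wt W = n →
    (cnt (some i :: W)).1 = sseq (n + 1) →
    Extremal (n + 1) (cnt (some i :: W)) i ∧ ∃ b, val (some i :: W) = val (extWord (n + 1) i b) := by
  induction n with
  | zero =>
    intro W i hW _
    exact ⟨extremal_one hW i, true, by rw [val, (wt_zero hW).1]; simp [extWord, val]⟩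
  | succ n ih =>
    intro W i hW hf
    obtain ⟨t1, t2, t3⟩ := tail_of_max (hW ▸ hf)
    rw [hW] at t1 t2 t3
    -- A tail divisible by `β` has vanishing near counts, which is too small.
    have hpos : 0 < sT (n + 1 + 1) := by
      have : 2 ^ 2 ≤ 2 ^ (n + 1 + 1) := Nat.pow_le_pow_right (by norm_num) (by omega)
      simp only [sT]
      omega
    cases W with
    | nil => simp [wt] at hW
    | cons o W =>
      cases o with
      | none =>
        simp only [cnt] at t2
        omega
      | some j =>
        have hW' : wt W = n := by simpa [wt] using hW
        obtain ⟨hE, b, hb⟩ := ih W j hW' t1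
        obtain ⟨b', rfl⟩ := hE.step (by omega) t2 t3
        refine ⟨hE.cons (by omega) b', ?_⟩
        by_cases hn : n + 1 = 3
        · refine ⟨b', ?_⟩
          rw [extWord, val_some (j + _) (some j :: W), hb, val_some, add_sub_cancel_right,
            ext_indep (n + 1) (by omega) j b b']
        · refine ⟨b, ?_⟩
          have : off (n + 1) b' = off (n + 1) b := by simp [off, hn]
          rw [extWord, val_some (j + _) (some j :: W), hb, val_some, this, add_sub_cancel_right]

lemma ext_inj (n : ℕ) : ∀ (i i' : ZMod 6) (b b' : Bool),
    val (extWord (n + 1) i b) = val (extWord (n + 1) i' b') → i = i' ∧ (3 ≤ n → b = b') := by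
  induction n with
  | zero =>
    intro i i' b b' h
    change U i + eβ * (eβ * val []) = U i' + eβ * (eβ * val []) at h
    exact ⟨(head_inj (eisZ_val _) (eisZ_val _) h).1, by omega⟩
  | succ n ih =>
    intro i i' b b' h
    change U i + eβ * (eβ * val (extWord (n + 1) (i - off (n + 1) b) b)) =
      U i' + eβ * (eβ * val (extWord (n + 1) (i' - off (n + 1) b') b')) at h
    obtain ⟨rfl, h2⟩ := head_inj (eisZ_val _) (eisZ_val _) h
    obtain ⟨h3, h4⟩ := ih _ _ _ _ h2
    refine ⟨rfl, fun hn => ?_⟩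
    rcases Nat.lt_or_ge n 3 with h | h
    · obtain rfl : n = 2 := by omega
      have : ∀ b b', off 3 b = off 3 b' → b = b' := by decide
      exact this b b' (sub_right_injective h3)
    · exact h4 h

/-- For `N ≥ 4` there are exactly 12 Eisenstein integers `x` not divisible by
`β` whose 2-NAF representation has exactly `N` nonzero digits and which
attain `s_N` optimal representations. -/
theorem stmt15 (N : ℕ) (hN : 4 ≤ N) :
    {x : ℂ | x ∈ EisZ ∧ ¬ (∃ y ∈ EisZ, x = eβ * y) ∧
      (∃ l : List ℂ, eIsRep x l ∧ eNAF 2 l ∧ eweight l = N) ∧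
      enumOpt x = sseq N}.ncard = 12 := by
  obtain ⟨n, rfl⟩ : ∃ n, N = n + 1 := ⟨N - 1, by omega⟩
  have hset : {x : ℂ | x ∈ EisZ ∧ ¬ (∃ y ∈ EisZ, x = eβ * y) ∧
      (∃ l : List ℂ, eIsRep x l ∧ eNAF 2 l ∧ eweight l = n + 1) ∧
      enumOpt x = sseq (n + 1)} =
      (fun p : ZMod 6 × Bool => val (extWord (n + 1) p.1 p.2)) '' Set.univ := by
    ext x
    constructor
    · rintro ⟨-, hdiv, ⟨l, h1, h2, h3⟩, hopt⟩
      obtain ⟨W, rfl, hW⟩ := exists_word l.length l x le_rfl h1 h2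
      rw [enumOpt_val] at hopt
      cases W with
      | nil => exact absurd ⟨0, eisZ_zero, by simp [val]⟩ hdiv
      | cons o W =>
        cases o with
        | none => exact absurd ⟨val W, eisZ_val W, rfl⟩ hdiv
        | some i =>
          have hW' : wt W = n := by
            rw [h3, wt] at hW
            omega
          obtain ⟨-, b, hb⟩ := eq_ext_of_max n W i hW' hopt
          exact ⟨(i, b), trivial, hb.symm⟩
    · rintro ⟨⟨i, b⟩, -, rfl⟩
      refine ⟨eisZ_val _, ?_, ?_, ?_⟩
      · rintro ⟨y, hy, h⟩
        simp only [extWord, val] at h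
        exact U_not_dvd i (eisZ_sub hy (eisZ_mul (eisZ_val _))) (by linear_combination h)
      · have := exists_naf (extWord (n + 1) i b)
        rwa [wt_ext] at this
      · rw [enumOpt_val]
        exact (extremal_ext n i b).hf
  rw [hset, Set.ncard_image_of_injective, Set.ncard_univ]
  · simp
  · rintro ⟨i, b⟩ ⟨i', b'⟩ h
    obtain ⟨h1, h2⟩ := ext_inj n i i' b b' h
    rw [h1, h2 (by omega)]
end
end

section
/- Define row vectors t_N ∈ ℤ^{1×7} by t_0 = e and, for N ∈ ℕ, t_{N+1} = t_N A_1 R if N ≡ 0 (mod 3), and t_{N+1} = t_N A_{−1} R otherwise. Then for every N ∈ ℕ: t_N = (s_N, 2s_{N−3}, s_{N−3}, 2s_{N−3}, 0, s_{N−1}, 0) if N ≡ 0 (mod 3); t_N = (s_N, 0, s_{N−1}, 0, s_{N−2}, s_{N−2}, s_{N−2}) if N ≡ 1 (mod 3); and t_N = (s_N, s_{N−2}, s_{N−2}, s_{N−2}, 0, s_{N−1}, 0) if N ≡ 2 (mod 3); where s_M = ⌊(6·2^M + 1)/7⌋ for M ≥ 0 and s_M = 0 for M < 0. -/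
/-!
The proof is an induction on `N`. Right multiplication by `A_1 R` and by `A_{-1} R` is an explicit
linear map on seven coordinates (`row_mul_E1_R7`, `row_mul_Em1_R7`). Applied to the claimed
form of `t_N`, it gives the claimed form of `t_{N+1}` immediately in every coordinate but the first.
The first coordinate requires

* `s_{N+1} = s_N + 2 s_{N-1}` if `N ≢ 2 (mod 3)` (`sZ_rec`),
* `s_{N+1} = s_N + 4 s_{N-2}` if `N ≡ 2 (mod 3)` (`sZ_rec_two`).

Both follow from `8 ^ k ≡ 1 (mod 7)`: writing `8 ^ k = 7 m + 1`, the floors become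
`s_{3k-1} = 3m`, `s_{3k} = 6m + 1`, `s_{3k+1} = 12m + 1`, `s_{3k+2} = 24m + 3` and
`s_{3k+3} = 48m + 7`, where the first formula includes the convention `s_{-1} = 0` (`m = 0`).
-/

open Matrix

noncomputable section

/-- The row vector `e = (1,0,0,0,0,0,0)`. -/
def e7 : Matrix (Fin 1) (Fin 7) ℤ := !![1,0,0,0,0,0,0]

/-- The permutation matrix `R` fixing coordinate 1 and cyclically permuting
coordinates 2,…,7. -/
def R7 : Matrix (Fin 7) (Fin 7) ℤ :=
  !![1,0,0,0,0,0,0;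
     0,0,1,0,0,0,0;
     0,0,0,1,0,0,0;
     0,0,0,0,1,0,0;
     0,0,0,0,0,1,0;
     0,0,0,0,0,0,1;
     0,1,0,0,0,0,0]

/-- The matrix `A_0`. -/
def E0 : Matrix (Fin 7) (Fin 7) ℤ :=
  !![1,0,0,0,0,0,0;
     0,0,0,0,0,0,0;
     0,0,0,0,0,0,0;
     0,0,0,0,0,0,0;
     0,0,0,0,0,0,0;
     0,0,0,0,0,0,0;
     0,0,0,0,0,0,0]

/-- The matrix `A_1`. -/
def E1 : Matrix (Fin 7) (Fin 7) ℤ :=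
  !![1,1,0,0,0,0,0;
     0,0,0,0,0,0,0;
     0,0,0,0,0,0,0;
     0,0,0,0,0,0,0;
     1,0,0,1,0,0,0;
     2,0,0,1,1,1,0;
     1,0,0,0,0,1,0]

/-- The matrix `A_{-1} = (Rᵀ)³ A_1 R³`. -/
def Em1 : Matrix (Fin 7) (Fin 7) ℤ := (R7ᵀ) ^ 3 * E1 * R7 ^ 3

open scoped Classical in
/-- The matrix `A_d` associated with a digit `d ∈ D`, where
`A_{λ^k} = (Rᵀ)^k A_1 R^k` for `λ = -ω²`. -/
def AmatE (d : ℂ) : Matrix (Fin 7) (Fin 7) ℤ :=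
  if d = 0 then E0
  else if d = 1 then E1
  else if d = -ω ^ 2 then (R7ᵀ) ^ 1 * E1 * R7 ^ 1
  else if d = ω then (R7ᵀ) ^ 2 * E1 * R7 ^ 2
  else if d = -1 then (R7ᵀ) ^ 3 * E1 * R7 ^ 3
  else if d = ω ^ 2 then (R7ᵀ) ^ 4 * E1 * R7 ^ 4
  else (R7ᵀ) ^ 5 * E1 * R7 ^ 5

/-- The row vectors `t_N`: `t_0 = e`, and `t_{N+1} = t_N A_1 R` if
`N ≡ 0 (mod 3)`, `t_{N+1} = t_N A_{-1} R` otherwise. -/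
def tE : ℕ → Matrix (Fin 1) (Fin 7) ℤ
  | 0 => e7
  | (N + 1) => tE N * (if N % 3 = 0 then E1 else Em1) * R7

/-- The sequence `s_M` extended to integer indices: `s_M = ⌊(6·2^M + 1)/7⌋`
for `M ≥ 0` and `s_M = 0` for `M < 0`. -/
def sZ (M : ℤ) : ℕ := if M < 0 then 0 else (6 * 2 ^ M.toNat + 1) / 7

lemma sZ_natCast (n : ℕ) : sZ (n : ℤ) = (6 * 2 ^ n + 1) / 7 := by
  simp [sZ]

lemma exists_eight_pow (k : ℕ) : ∃ m : ℕ, 2 ^ (3 * k) = 7 * m + 1 := by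
  induction k with
  | zero => exact ⟨0, rfl⟩
  | succ k ih =>
    obtain ⟨m, hm⟩ := ih
    exact ⟨8 * m + 1, by rw [Nat.mul_succ, pow_add, hm]; ring⟩

/-- Closed forms of five consecutive values of `s`, starting at `s_{3k-1}`, in terms of
`m = (8 ^ k - 1) / 7`. -/
lemma sZ_closed (k : ℕ) : ∃ m : ℕ,
    sZ (((3 * k : ℕ) : ℤ) - 1) = 3 * m ∧ sZ ((3 * k : ℕ) : ℤ) = 6 * m + 1 ∧
    sZ ((3 * k + 1 : ℕ) : ℤ) = 12 * m + 1 ∧ sZ ((3 * k + 2 : ℕ) : ℤ) = 24 * m + 3 ∧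
    sZ ((3 * k + 3 : ℕ) : ℤ) = 48 * m + 7 := by
  obtain ⟨m, hm⟩ := exists_eight_pow k
  refine ⟨m, ?_, ?_, ?_, ?_, ?_⟩
  · rcases k with _ | j
    · have : m = 0 := by simpa using hm
      simp [this, sZ]
    · have h : (((3 * (j + 1) : ℕ) : ℤ) - 1) = ((3 * j + 2 : ℕ) : ℤ) := by push_cast; ring
      have h2 : 2 ^ (3 * (j + 1)) = 2 * 2 ^ (3 * j + 2) := by ring
      rw [h, sZ_natCast]
      omega
  all_goals
    rw [sZ_natCast]
    try rw [pow_add]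
    rw [hm]
    omega

lemma sZ_rec (N : ℕ) (h : N % 3 ≠ 2) :
    sZ ((N + 1 : ℕ) : ℤ) = sZ N + 2 * sZ ((N : ℤ) - 1) := by
  obtain ⟨m, h1, h2, h3, h4, -⟩ := sZ_closed (N / 3)
  rcases (by omega : N = 3 * (N / 3) ∨ N = 3 * (N / 3) + 1) with hN | hN
  · rw [← hN] at h1 h2 h3
    omega
  · have h5 : ((N : ℤ) - 1) = ((3 * (N / 3) : ℕ) : ℤ) := by omega
    rw [h5, h2, show N + 1 = 3 * (N / 3) + 2 by omega, h4]
    rw [← hN] at h3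
    omega

lemma sZ_rec_two (N : ℕ) (h : N % 3 = 2) :
    sZ ((N + 1 : ℕ) : ℤ) = sZ N + 4 * sZ ((N : ℤ) - 2) := by
  obtain ⟨m, -, h2, -, h4, h5⟩ := sZ_closed (N / 3)
  have hN : N = 3 * (N / 3) + 2 := by omega
  have h6 : ((N : ℤ) - 2) = ((3 * (N / 3) : ℕ) : ℤ) := by omega
  rw [h6, h2, show N + 1 = 3 * (N / 3) + 3 by omega, h5]
  rw [← hN] at h4
  omega

lemma row_mul_E1_R7 (a b c d x y z : ℤ) :
    (!![a, b, c, d, x, y, z] : Matrix (Fin 1) (Fin 7) ℤ) * E1 * R7 =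
      !![a + x + 2 * y + z, 0, a, 0, x + y, y, y + z] := by
  ext i j
  fin_cases i
  fin_cases j <;> simp [E1, R7, Matrix.mul_apply, Fin.sum_univ_succ] <;> ring

lemma Em1_eq : Em1 =
    !![1,0,0,0,1,0,0;
       1,0,0,0,0,0,1;
       2,1,1,0,0,0,1;
       1,0,1,0,0,0,0;
       0,0,0,0,0,0,0;
       0,0,0,0,0,0,0;
       0,0,0,0,0,0,0] := by
  unfold Em1 E1 R7
  decide +kernel

lemma row_mul_Em1_R7 (a b c d x y z : ℤ) :
    (!![a, b, c, d, x, y, z] : Matrix (Fin 1) (Fin 7) ℤ) * Em1 * R7 =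
      !![a + b + 2 * c + d, b + c, c, c + d, 0, a, 0] := by
  rw [Em1_eq]
  ext i j
  fin_cases i
  fin_cases j <;> simp [R7, Matrix.mul_apply, Fin.sum_univ_succ] <;> ring

/-- Explicit form of the vectors `t_N` in terms of the sequence `s`. -/
theorem stmt18 (N : ℕ) :
    (N % 3 = 0 →
      tE N = !![(sZ N : ℤ), 2 * (sZ ((N : ℤ) - 3) : ℤ), (sZ ((N : ℤ) - 3) : ℤ),
                2 * (sZ ((N : ℤ) - 3) : ℤ), 0, (sZ ((N : ℤ) - 1) : ℤ), 0]) ∧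
    (N % 3 = 1 →
      tE N = !![(sZ N : ℤ), 0, (sZ ((N : ℤ) - 1) : ℤ), 0, (sZ ((N : ℤ) - 2) : ℤ),
                (sZ ((N : ℤ) - 2) : ℤ), (sZ ((N : ℤ) - 2) : ℤ)]) ∧
    (N % 3 = 2 →
      tE N = !![(sZ N : ℤ), (sZ ((N : ℤ) - 2) : ℤ), (sZ ((N : ℤ) - 2) : ℤ),
                (sZ ((N : ℤ) - 2) : ℤ), 0, (sZ ((N : ℤ) - 1) : ℤ), 0]) := by
  induction N with
  | zero => simp [tE, e7, sZ]
  | succ N ih =>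
    obtain ⟨ih0, ih1, ih2⟩ := ih
    have e1 : ((N + 1 : ℕ) : ℤ) - 1 = N := by push_cast; ring
    have e2 : ((N + 1 : ℕ) : ℤ) - 2 = (N : ℤ) - 1 := by push_cast; ring
    have e3 : ((N + 1 : ℕ) : ℤ) - 3 = (N : ℤ) - 2 := by push_cast; ring
    rw [e1, e2, e3]
    refine ⟨fun h => ?_, fun h => ?_, fun h => ?_⟩
    · have hN : N % 3 = 2 := by omega
      rw [tE, if_neg (by omega), ih2 hN, row_mul_Em1_R7, sZ_rec_two N hN]
      push_cast
      ring_nf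
    · have hN : N % 3 = 0 := by omega
      rw [tE, if_pos hN, ih0 hN, row_mul_E1_R7, sZ_rec N (by omega)]
      push_cast
      ring_nf
    · have hN : N % 3 = 1 := by omega
      rw [tE, if_neg (by omega), ih1 hN, row_mul_Em1_R7, sZ_rec N (by omega)]
      push_cast
      ring_nf
end
end
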